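/- Let n be a positive integer and let α ≥ 0 be a real number (for the induced ensemble obtained from an M×2n real Gaussian matrix, α = (M−2n)/2). For G drawn from the induced real Ginibre ensemble of size 2n with parameter α, and for every complex number z, ⟨det(z·I − G)⟩ = z^{2n}. -/

import Mathlib

open MeasureTheory Matrix

/-- The (unnormalized) density of the induced real Ginibre ensemble of size `N`
with parameter `α`: `det(G Gᵀ)^α exp(-Tr(G Gᵀ)/2)`. -/
noncomputable def inducedRealGinibreWeight (N : ℕ) (α : ℝ) (g : Fin N → Fin N → ℝ) : ℝ :=
  (Matrix.of g * (Matrix.of g)ᵀ).det ^ α *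
    Real.exp (-(Matrix.of g * (Matrix.of g)ᵀ).trace / 2)

namespace InducedRealGinibre

/-- The squared Frobenius norm of a square array. -/
def sumSq {N : ℕ} (g : Fin N → Fin N → ℝ) : ℝ := ∑ i, ∑ j, g i j ^ 2

lemma sumSq_nonneg {N : ℕ} (g : Fin N → Fin N → ℝ) : 0 ≤ sumSq g :=
  Finset.sum_nonneg fun _ _ => Finset.sum_nonneg fun _ _ => sq_nonneg _

lemma trace_mul_transpose_eq_sumSq {N : ℕ} (g : Fin N → Fin N → ℝ) :
    (Matrix.of g * (Matrix.of g)ᵀ).trace = sumSq g := by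
  simp [Matrix.trace, Matrix.mul_apply, sumSq, sq]

lemma det_mul_transpose_eq_sq {N : ℕ} (g : Fin N → Fin N → ℝ) :
    (Matrix.of g * (Matrix.of g)ᵀ).det = (Matrix.of g).det ^ 2 := by
  rw [Matrix.det_mul, Matrix.det_transpose, sq]

lemma abs_le_one_add_sumSq {N : ℕ} (g : Fin N → Fin N → ℝ) (i j : Fin N) :
    |g i j| ≤ 1 + sumSq g := by
  have h1 : g i j ^ 2 ≤ ∑ j, g i j ^ 2 :=
    Finset.single_le_sum (f := fun j => g i j ^ 2) (fun _ _ => sq_nonneg _) (Finset.mem_univ j)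
  have h2 : ∑ j, g i j ^ 2 ≤ sumSq g :=
    Finset.single_le_sum (f := fun i => ∑ j, g i j ^ 2)
      (fun _ _ => Finset.sum_nonneg fun _ _ => sq_nonneg _) (Finset.mem_univ i)
  nlinarith [sq_abs (g i j), sq_nonneg (|g i j| - 1), abs_nonneg (g i j)]

lemma integrable_exp_neg_mul_sumSq {N : ℕ} {b : ℝ} (hb : 0 < b) :
    Integrable fun g : Fin N → Fin N → ℝ => Real.exp (-b * sumSq g) := by
  have h : Integrable fun g : Fin N → Fin N → ℝ =>
      ∏ i, (fun v : Fin N → ℝ => ∏ j, (fun x : ℝ => Real.exp (-b * x ^ 2)) (v j)) (g i) :=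
    Integrable.fintype_prod fun _ =>
      Integrable.fintype_prod fun _ => integrable_exp_neg_mul_sq hb
  refine h.congr (Filter.Eventually.of_forall fun g => ?_)
  simp only [sumSq, Finset.mul_sum, Real.exp_sum]

lemma exists_pow_le_mul_exp {c : ℝ} (hc : 0 ≤ c) (m : ℕ) {b : ℝ} (hb : 0 < b) :
    ∃ C : ℝ, 0 ≤ C ∧ ∀ s : ℝ, 0 ≤ s → (c + s) ^ m ≤ C * Real.exp (b * s) := by
  obtain ⟨e, he, heb⟩ : ∃ e : ℝ, 0 < e ∧ m * e ≤ b := by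
    refine ⟨b / (m + 1), by positivity, ?_⟩
    rw [mul_div_assoc', div_le_iff₀ (by positivity)]
    nlinarith
  refine ⟨(c + e⁻¹) ^ m, by positivity, fun s hs => ?_⟩
  have h1 : c + s ≤ (c + e⁻¹) * Real.exp (e * s) := by
    have h2 := Real.add_one_le_exp (e * s)
    have h3 : s ≤ e⁻¹ * Real.exp (e * s) := by
      rw [inv_mul_eq_div, le_div_iff₀ he]
      linarith
    have h4 : c ≤ c * Real.exp (e * s) :=
      le_mul_of_one_le_right hc (Real.one_le_exp (by positivity))
    linarith
  calc (c + s) ^ m ≤ ((c + e⁻¹) * Real.exp (e * s)) ^ m := by gcongr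
    _ = (c + e⁻¹) ^ m * Real.exp (m * e * s) := by
      rw [mul_pow, ← Real.exp_nat_mul, mul_assoc]
    _ ≤ _ := by gcongr

lemma continuous_weight (N : ℕ) {α : ℝ} (hα : 0 ≤ α) :
    Continuous (inducedRealGinibreWeight N α) := by
  have h : Continuous fun g : Fin N → Fin N → ℝ => Matrix.of g := continuous_id
  unfold inducedRealGinibreWeight
  have hm := h.matrix_mul h.matrix_transpose
  exact (hm.matrix_det.rpow_const fun _ => Or.inr hα).mul
    (Real.continuous_exp.comp (hm.matrix_trace.neg.div_const 2))

lemma weight_nonneg (N : ℕ) (α : ℝ) (g : Fin N → Fin N → ℝ) :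
    0 ≤ inducedRealGinibreWeight N α g := by
  unfold inducedRealGinibreWeight
  rw [det_mul_transpose_eq_sq]
  positivity

lemma exists_weight_le (N : ℕ) {α : ℝ} (hα : 0 ≤ α) :
    ∃ C : ℝ, ∃ m : ℕ, 0 ≤ C ∧ ∀ g, inducedRealGinibreWeight N α g ≤
      C * (1 + sumSq g) ^ m * Real.exp (-sumSq g / 2) := by
  refine ⟨((N.factorial : ℝ) ^ 2) ^ ⌈α⌉₊, N * 2 * ⌈α⌉₊, by positivity, fun g => ?_⟩
  unfold inducedRealGinibreWeight
  rw [trace_mul_transpose_eq_sumSq, det_mul_transpose_eq_sq]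
  gcongr
  have hS := sumSq_nonneg g
  have hdet : |(Matrix.of g).det| ≤ N.factorial * (1 + sumSq g) ^ N := by
    have := Matrix.det_le (abv := AbsoluteValue.abs) (A := Matrix.of g)
      (abs_le_one_add_sumSq g)
    simpa using this
  have hone : 1 ≤ (N.factorial * (1 + sumSq g) ^ N) ^ 2 :=
    one_le_pow₀ (one_le_mul_of_one_le_of_one_le
      (by exact_mod_cast N.factorial_pos) (one_le_pow₀ (by linarith)))
  calc ((Matrix.of g).det ^ 2) ^ α
      ≤ ((N.factorial * (1 + sumSq g) ^ N) ^ 2) ^ α := by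
        rw [← sq_abs]
        gcongr
    _ ≤ ((N.factorial * (1 + sumSq g) ^ N) ^ 2) ^ (⌈α⌉₊ : ℝ) :=
        Real.rpow_le_rpow_of_exponent_le hone (Nat.le_ceil α)
    _ = _ := by
        rw [Real.rpow_natCast]
        ring

/-- A continuous function of polynomial growth is integrable against the weight. -/
lemma integrable_weight_mul {N : ℕ} {α : ℝ} (hα : 0 ≤ α) {p : (Fin N → Fin N → ℝ) → ℂ}
    (hp : Continuous p) {K c : ℝ} {m : ℕ} (hK : 0 ≤ K) (hc : 0 ≤ c)
    (hbound : ∀ g, ‖p g‖ ≤ K * (c + sumSq g) ^ m) :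
    Integrable fun g => (inducedRealGinibreWeight N α g : ℂ) * p g := by
  obtain ⟨C, k, hC, hw⟩ := exists_weight_le N hα
  obtain ⟨A, hA, hA'⟩ := exists_pow_le_mul_exp zero_le_one k (b := 1 / 8) (by norm_num)
  obtain ⟨B, hB, hB'⟩ := exists_pow_le_mul_exp hc m (b := 1 / 8) (by norm_num)
  have hint := (integrable_exp_neg_mul_sumSq (N := N) (b := 1 / 4) (by norm_num)).const_mul
    (C * A * (K * B))
  refine hint.mono'
    ((Complex.continuous_ofReal.comp (continuous_weight N hα)).mul hp).aestronglyMeasurable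
    (Filter.Eventually.of_forall fun g => ?_)
  have hS := sumSq_nonneg g
  rw [norm_mul, Complex.norm_real, Real.norm_of_nonneg (weight_nonneg N α g)]
  calc inducedRealGinibreWeight N α g * ‖p g‖
      ≤ (C * (1 + sumSq g) ^ k * Real.exp (-sumSq g / 2)) * (K * (c + sumSq g) ^ m) := by
        gcongr
        · exact hw g
        · exact hbound g
    _ ≤ (C * (A * Real.exp (1 / 8 * sumSq g)) * Real.exp (-sumSq g / 2)) *
          (K * (B * Real.exp (1 / 8 * sumSq g))) := by
        gcongr
        · exact hA' _ hS
        · exact hB' _ hS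
    _ = C * A * (K * B) * (Real.exp (1 / 8 * sumSq g) * Real.exp (-sumSq g / 2) *
          Real.exp (1 / 8 * sumSq g)) := by ring
    _ = _ := by
        rw [← Real.exp_add, ← Real.exp_add]
        congr 2
        ring

lemma integrable_weight (N : ℕ) {α : ℝ} (hα : 0 ≤ α) :
    Integrable (inducedRealGinibreWeight N α) := by
  have h := integrable_weight_mul (N := N) hα (p := fun _ => 1) continuous_const (K := 1) (c := 1)
    (m := 0) zero_le_one zero_le_one (by simp)
  simpa using h.re

lemma integral_weight_pos (N : ℕ) {α : ℝ} (hα : 0 ≤ α) :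
    0 < ∫ g, inducedRealGinibreWeight N α g := by
  refine integral_pos_of_integrable_nonneg_nonzero (x := (1 : Matrix (Fin N) (Fin N) ℝ))
    (continuous_weight N hα) (integrable_weight N hα) (weight_nonneg N α) ?_
  have h : Matrix.of (1 : Matrix (Fin N) (Fin N) ℝ) = 1 := rfl
  unfold inducedRealGinibreWeight
  rw [h]
  simp [Real.exp_ne_zero]

/-- The characteristic polynomial of a real square array, evaluated at a complex number. -/
noncomputable def charDet {N : ℕ} (z : ℂ) (g : Fin N → Fin N → ℝ) : ℂ :=
  (z • (1 : Matrix (Fin N) (Fin N) ℂ) - (Matrix.of g).map ((↑) : ℝ → ℂ)).det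

lemma integrable_weight_mul_charDet (N : ℕ) {α : ℝ} (hα : 0 ≤ α) (z : ℂ) :
    Integrable fun g => (inducedRealGinibreWeight N α g : ℂ) * charDet z g := by
  refine integrable_weight_mul hα (K := N.factorial) (c := ‖z‖ + 1) (m := N) ?_ (by positivity)
    (by positivity) fun g => ?_
  · have h : Continuous fun g : Fin N → Fin N → ℝ => Matrix.of g := continuous_id
    exact (continuous_const.sub (h.matrix_map Complex.continuous_ofReal)).matrix_det
  · have hentry : ∀ i j, ‖(z • (1 : Matrix (Fin N) (Fin N) ℂ) -
        (Matrix.of g).map ((↑) : ℝ → ℂ)) i j‖ ≤ ‖z‖ + 1 + sumSq g := by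
      intro i j
      have h1 : ‖(z • (1 : Matrix (Fin N) (Fin N) ℂ)) i j‖ ≤ ‖z‖ := by
        rw [Matrix.smul_apply, Matrix.one_apply]
        split_ifs <;> simp
      have h2 : ‖(Matrix.of g).map ((↑) : ℝ → ℂ) i j‖ ≤ 1 + sumSq g := by
        simpa using abs_le_one_add_sumSq g i j
      rw [Matrix.sub_apply]
      linarith [norm_sub_le ((z • (1 : Matrix (Fin N) (Fin N) ℂ)) i j)
        ((Matrix.of g).map ((↑) : ℝ → ℂ) i j)]
    have := Matrix.det_le (abv := NormedField.toAbsoluteValue ℂ) hentry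
    rw [nsmul_eq_mul, Fintype.card_fin] at this
    exact this

/-- Multiplying each row of an array by a sign. -/
def rowSign {N : ℕ} (r : Fin N → ℤˣ) (g : Fin N → Fin N → ℝ) : Fin N → Fin N → ℝ :=
  fun i j => ((r i : ℤ) : ℝ) * g i j

lemma sign_mul_self (u : ℤˣ) : ((u : ℤ) : ℝ) * ((u : ℤ) : ℝ) = 1 := by
  rcases Int.units_eq_one_or u with rfl | rfl <;> simp

lemma weight_rowSign {N : ℕ} (α : ℝ) (r : Fin N → ℤˣ) (g : Fin N → Fin N → ℝ) :
    inducedRealGinibreWeight N α (rowSign r g) = inducedRealGinibreWeight N α g := by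
  have hdet : (Matrix.of (rowSign r g)).det ^ 2 = (Matrix.of g).det ^ 2 := by
    have h : Matrix.of (rowSign r g) =
        Matrix.diagonal (fun i => ((r i : ℤ) : ℝ)) * Matrix.of g := by
      ext i j
      simp [rowSign]
    rw [h, Matrix.det_mul, Matrix.det_diagonal, mul_pow, sq (∏ i, _), ← Finset.prod_mul_distrib]
    simp [sign_mul_self]
  have hsum : sumSq (rowSign r g) = sumSq g := by
    simp only [sumSq, rowSign, mul_pow]
    simp [sq, sign_mul_self]
  unfold inducedRealGinibreWeight
  rw [det_mul_transpose_eq_sq, det_mul_transpose_eq_sq, trace_mul_transpose_eq_sumSq,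
    trace_mul_transpose_eq_sumSq, hdet, hsum]

lemma measurePreserving_rowSign {N : ℕ} (r : Fin N → ℤˣ) : MeasurePreserving (rowSign r) := by
  refine volume_preserving_pi (f := fun i (v : Fin N → ℝ) j => ((r i : ℤ) : ℝ) * v j) fun i => ?_
  rcases Int.units_eq_one_or (r i) with h | h
  · simp only [h, Units.val_one, Int.cast_one, one_mul]
    exact MeasurePreserving.id volume
  · simp only [h, Units.val_neg, Units.val_one, Int.cast_neg, Int.cast_one, neg_one_mul]
    exact Measure.measurePreserving_neg volume

lemma measurableEmbedding_rowSign {N : ℕ} (r : Fin N → ℤˣ) : MeasurableEmbedding (rowSign r) := by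
  have hinv : Function.Involutive (rowSign r) := fun g => by
    ext i j
    simp [rowSign, ← mul_assoc, sign_mul_self]
  exact (MeasurableEquiv.ofInvolutive _ hinv (measurePreserving_rowSign r).measurable
    ).measurableEmbedding

/-- Summing over all row sign changes kills every term containing an entry of the matrix. -/
lemma sum_charDet_rowSign {N : ℕ} (z : ℂ) (g : Fin N → Fin N → ℝ) :
    ∑ r : Fin N → ℤˣ, charDet z (rowSign r g) = (2 * z) ^ N := by
  have h := (Matrix.detRowAlternating (n := Fin N) (R := ℂ)).toMultilinearMap.map_sum
    (fun (i : Fin N) (u : ℤˣ) (j : Fin N) =>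
      z * (1 : Matrix (Fin N) (Fin N) ℂ) i j - ((u : ℤ) : ℂ) * (g i j : ℂ))
  have hl : (fun i : Fin N => ∑ u : ℤˣ, fun j : Fin N =>
      z * (1 : Matrix (Fin N) (Fin N) ℂ) i j - ((u : ℤ) : ℂ) * (g i j : ℂ)) =
      (2 * z) • (1 : Matrix (Fin N) (Fin N) ℂ) := by
    ext i j
    rw [Finset.sum_apply, UnitsInt.univ]
    simp
    ring
  rw [hl] at h
  have hr : (Matrix.detRowAlternating (n := Fin N) (R := ℂ)).toMultilinearMap
      ((2 * z) • (1 : Matrix (Fin N) (Fin N) ℂ)) = (2 * z) ^ N := by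
    change Matrix.det ((2 * z) • (1 : Matrix (Fin N) (Fin N) ℂ)) = _
    simp
  rw [← hr, h]
  refine Finset.sum_congr rfl fun r _ => ?_
  change Matrix.det _ = Matrix.det _
  congr 1
  ext i j
  simp [rowSign]

lemma integral_weight_mul_charDet (N : ℕ) {α : ℝ} (hα : 0 ≤ α) (z : ℂ) :
    ∫ g, (inducedRealGinibreWeight N α g : ℂ) * charDet z g =
      z ^ N * ((∫ g, inducedRealGinibreWeight N α g : ℝ) : ℂ) := by
  have hF := integrable_weight_mul_charDet N hα z
  have hinv (r : Fin N → ℤˣ) :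
      ∫ g, (inducedRealGinibreWeight N α g : ℂ) * charDet z (rowSign r g) =
        ∫ g, (inducedRealGinibreWeight N α g : ℂ) * charDet z g := by
    rw [← (measurePreserving_rowSign r).integral_comp (measurableEmbedding_rowSign r)
      fun g => (inducedRealGinibreWeight N α g : ℂ) * charDet z g]
    simp only [weight_rowSign]
  have hint (r : Fin N → ℤˣ) :
      Integrable fun g => (inducedRealGinibreWeight N α g : ℂ) * charDet z (rowSign r g) := by
    have := (measurePreserving_rowSign r).integrable_comp_of_integrable hF
    simpa only [Function.comp_def, weight_rowSign] using this
  have hsum := integral_finsetSum (μ := volume) Finset.univ fun r _ => hint r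
  simp only [hinv, ← Finset.mul_sum, sum_charDet_rowSign, integral_mul_const,
    integral_complex_ofReal, Finset.sum_const, Finset.card_univ] at hsum
  have hcard : Fintype.card (Fin N → ℤˣ) = 2 ^ N := by simp
  rw [hcard, nsmul_eq_mul, mul_pow] at hsum
  push_cast at hsum
  have h2 : (2 : ℂ) ^ N ≠ 0 := pow_ne_zero N two_ne_zero
  apply mul_left_cancel₀ h2
  rw [← hsum]
  ring

end InducedRealGinibre

/-- The even-degree skew orthogonal polynomial for the induced real Ginibre ensemble:
`⟨det (z I - G)⟩ = z^(2n)`, where `⟨·⟩` is the normalized average against the density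
`det(G Gᵀ)^α exp(-Tr(G Gᵀ)/2)` with respect to Lebesgue measure on the entries. -/
theorem inducedRealGinibre_even_skew_orthogonal_poly (n : ℕ) (hn : 0 < n)
    (α : ℝ) (hα : 0 ≤ α) (z : ℂ) :
    (∫ g : Fin (2 * n) → Fin (2 * n) → ℝ,
        (inducedRealGinibreWeight (2 * n) α g : ℂ) *
          (z • (1 : Matrix (Fin (2 * n)) (Fin (2 * n)) ℂ)
            - (Matrix.of g).map ((↑) : ℝ → ℂ)).det) /
      ((∫ g : Fin (2 * n) → Fin (2 * n) → ℝ, inducedRealGinibreWeight (2 * n) α g : ℝ) : ℂ)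
      = z ^ (2 * n) := by
  have hZ := InducedRealGinibre.integral_weight_pos (2 * n) hα
  rw [div_eq_iff (by exact_mod_cast hZ.ne')]
  exact InducedRealGinibre.integral_weight_mul_charDet (2 * n) hα z
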